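/- Let V be a compact subset of ℝ with Lebesgue measure λ(V) > 0, let c > 0, and let P = ½δ_{f₁} + ½δ_{f₂} be the Borel probability measure on C(V) assigning mass ½ to each of the constant functions f₁ ≡ −c and f₂ ≡ c. Then for every x ∈ C(V) satisfying −c < x(v) < c for all v ∈ V, D_MHR(x,P) = 1/2. In particular, D_MHR(·,P) is constant on this set, so the modified half region depth is not strictly decreasing with respect to a deepest point. -/

import Mathlib

/-!
Integrating against `½δ_f + ½δ_g` averages the two values, whatever the integrand, because
singletons of `C(V, ℝ)` are Borel. For `-c < x < c` the set `{v | y v ≤ x v}` is all of `V` when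
`y ≡ -c` and empty when `y ≡ c`, and `{v | x v ≤ y v}` behaves the other way round. Hence both
integrals equal `λ(V) / 2`, and `λ(V)` is positive and, by compactness, finite.
-/

open MeasureTheory Filter Topology
open scoped ENNReal

/-- Lebesgue measure on the subtype `V ⊆ ℝ`. -/
noncomputable def lamV (V : Set ℝ) : Measure V :=
  Measure.comap Subtype.val volume

/-- The modified half region depth
`D_MHR(x,P) = min{∫ λ{v : y v ≤ x v} dP(y), ∫ λ{v : x v ≤ y v} dP(y)} / λ(V)`. -/
noncomputable def DMHR {V : Set ℝ} [CompactSpace V] [MeasurableSpace C(V, ℝ)]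
    (x : C(V, ℝ)) (P : Measure C(V, ℝ)) : ℝ :=
  min (∫ y, (lamV V {v | y v ≤ x v}).toReal ∂P)
      (∫ y, (lamV V {v | x v ≤ y v}).toReal ∂P) / (lamV V Set.univ).toReal

/-- Since singletons are measurable, no measurability of `F` is required. -/
lemma integral_half_dirac_add_half_dirac {α : Type*} [MeasurableSpace α]
    [MeasurableSingletonClass α] (f g : α) (F : α → ℝ) :
    ∫ y, F y ∂((2 : ℝ≥0∞)⁻¹ • Measure.dirac f + (2 : ℝ≥0∞)⁻¹ • Measure.dirac g)
      = (F f + F g) / 2 := by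
  have h : ∀ a : α, Integrable F ((2 : ℝ≥0∞)⁻¹ • Measure.dirac a) := fun a =>
    (integrable_dirac (by simp)).smul_measure (by simp)
  rw [integral_add_measure (h f) (h g), integral_smul_measure, integral_smul_measure,
    integral_dirac, integral_dirac]
  simp only [ENNReal.toReal_inv, ENNReal.toReal_ofNat, smul_eq_mul]
  ring

lemma lamV_univ {V : Set ℝ} (hV : MeasurableSet V) : lamV V Set.univ = volume V := by
  rw [lamV, comap_subtype_coe_apply hV, Set.image_univ, Subtype.range_coe]

/-- For `P = ½δ_{−c} + ½δ_{c}` (Dirac masses at the constant functions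
`−c` and `c`) on `C(V)` with `λ(V) > 0`, every `x` with `−c < x(v) < c` for all `v` has
`D_MHR(x, P) = 1/2`; hence the modified half region depth is constant on this set. -/
theorem stmt_17 (V : Set ℝ) [CompactSpace V] (hV : IsCompact V)
    (hVpos : 0 < volume V)
    [MeasurableSpace C(V, ℝ)] [BorelSpace C(V, ℝ)]
    (c : ℝ) (hc : 0 < c)
    (x : C(V, ℝ)) (hx : ∀ v, -c < x v ∧ x v < c) :
    DMHR x ((2 : ℝ≥0∞)⁻¹ • Measure.dirac (ContinuousMap.const V (-c)) +
        (2 : ℝ≥0∞)⁻¹ • Measure.dirac (ContinuousMap.const V c)) = 1 / 2 := by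
  have hpos : 0 < (lamV V Set.univ).toReal := by
    rw [lamV_univ hV.measurableSet]
    exact ENNReal.toReal_pos hVpos.ne' hV.measure_lt_top.ne
  have h1 : {v : V | -c ≤ x v} = Set.univ := Set.eq_univ_of_forall fun v => (hx v).1.le
  have h2 : {v : V | c ≤ x v} = ∅ := Set.eq_empty_of_forall_notMem fun v => not_le.2 (hx v).2
  have h3 : {v : V | x v ≤ -c} = ∅ := Set.eq_empty_of_forall_notMem fun v => not_le.2 (hx v).1
  have h4 : {v : V | x v ≤ c} = Set.univ := Set.eq_univ_of_forall fun v => (hx v).2.le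
  rw [DMHR, integral_half_dirac_add_half_dirac, integral_half_dirac_add_half_dirac]
  simp only [ContinuousMap.const_apply, h1, h2, h3, h4, measure_empty, ENNReal.toReal_zero,
    add_zero, zero_add, min_self]
  field_simp
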